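/- The m-core-EP order is transitive: let A, B, C be n×n complex matrices with rank(B) ≥ rank(A), rank(C) ≥ rank(B), Ind(A) = k, Ind(B) = t, Ind(C) = s, rank(A^k) = rank((A^k)~ A^k), rank(B^t) = rank((B^t)~ B^t), and rank(C^s) = rank((C^s)~ C^s). If A ≤Ⓔ B and B ≤Ⓔ C, then A ≤Ⓔ C. -/

import Mathlib

/-!
Let `X` and `Y` be the m-core-EP inverses of `A` and `B`. The rank condition `Ind(A) = k` gives
`A X² = X` (`mul_sq_of_isMCoreEP`), hence `B X² = X` because `A X = B X`, and by iteration
`X = Bᵗ Xᵗ⁺¹`. So the columns of `X` lie in the range of `Bᵗ`, where `Y B` acts as the identity: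
`Y B X = X`.

* On the right, `C X = C Y B X = B Y B X = B X = A X`.
* On the left, `(B Y)(A X) = B Y B X = A X`. Both factors are Minkowski self-adjoint, so taking
  adjoints gives `(A X)(B Y) = A X`, that is `X = X B Y`. Then
  `X C = X B Y C = X B Y B = X B = X A`.
-/

open Matrix

noncomputable section

/-- The Minkowski metric matrix `G = diag(1, -1, …, -1)`. -/
def mink (n : ℕ) : Matrix (Fin n) (Fin n) ℂ :=
  Matrix.diagonal (fun i => if (i : ℕ) = 0 then 1 else -1)

/-- The Minkowski adjoint `A~ = G A* G`. -/
def madj {n : ℕ} (A : Matrix (Fin n) (Fin n) ℂ) : Matrix (Fin n) (Fin n) ℂ :=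
  mink n * Aᴴ * mink n

/-- `k` is the index of `A`: the smallest positive integer with
`rank (A^(k+1)) = rank (A^k)`. -/
def IsInd {n : ℕ} (A : Matrix (Fin n) (Fin n) ℂ) (k : ℕ) : Prop :=
  0 < k ∧ (A ^ (k + 1)).rank = (A ^ k).rank ∧
    ∀ j, 0 < j → (A ^ (j + 1)).rank = (A ^ j).rank → k ≤ j

/-- `X` is an m-core-EP inverse of `A` (with `Ind(A) = k`). -/
def IsMCoreEP {n : ℕ} (A X : Matrix (Fin n) (Fin n) ℂ) (k : ℕ) : Prop :=
  X * A * X = X ∧ X * A ^ (k + 1) = A ^ k ∧ madj (A * X) = A * X ∧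
    ∃ Z : Matrix (Fin n) (Fin n) ℂ, X = A ^ k * Z

/-- The m-core-EP order `A ≤Ⓔ B` (for `A` with `Ind(A) = k`): the m-core-EP
inverse `X` of `A` exists and satisfies `X A = X B` and `A X = B X`. -/
def MCoreEPLE {n : ℕ} (A B : Matrix (Fin n) (Fin n) ℂ) (k : ℕ) : Prop :=
  ∃ X, IsMCoreEP A X k ∧ X * A = X * B ∧ A * X = B * X

lemma mink_mul_self (n : ℕ) : mink n * mink n = 1 := by
  unfold mink
  rw [Matrix.diagonal_mul_diagonal, ← Matrix.diagonal_one]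
  congr 1
  funext i
  split_ifs <;> simp

lemma madj_mul {n : ℕ} (A B : Matrix (Fin n) (Fin n) ℂ) :
    madj (A * B) = madj B * madj A := by
  have h : madj B * madj A = mink n * Bᴴ * (mink n * mink n) * Aᴴ * mink n := by
    simp only [madj, Matrix.mul_assoc]
  rw [h, mink_mul_self]
  simp only [madj, Matrix.conjTranspose_mul, Matrix.mul_assoc, Matrix.one_mul]

/-- When `rank (A^(k+1)) = rank (A^k)`, every column of `A^k` is in the range of `A^(k+1)`. -/
lemma exists_mulVec_pow_succ {n k : ℕ} {A : Matrix (Fin n) (Fin n) ℂ}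
    (h : (A ^ (k + 1)).rank = (A ^ k).rank) (v : Fin n → ℂ) :
    ∃ w, A ^ (k + 1) *ᵥ w = A ^ k *ᵥ v := by
  have hle : LinearMap.range (A ^ (k + 1)).mulVecLin ≤ LinearMap.range (A ^ k).mulVecLin := by
    rw [pow_succ, Matrix.mulVecLin_mul]
    exact LinearMap.range_comp_le_range _ _
  have heq := Submodule.eq_of_le_of_finrank_eq hle h
  have hv : A ^ k *ᵥ v ∈ LinearMap.range (A ^ k).mulVecLin := ⟨v, rfl⟩
  rw [← heq] at hv
  exact hv

/-- An m-core-EP inverse satisfies `A X² = X`: the product `A X` fixes the range of `A^k`, which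
contains the columns of `X`. -/
lemma mul_sq_of_isMCoreEP {n k : ℕ} {A X : Matrix (Fin n) (Fin n) ℂ}
    (hk : IsInd A k) (hX : IsMCoreEP A X k) : A * X * X = X := by
  obtain ⟨-, h2, -, Z, hZ⟩ := hX
  have hfix : A * X * A ^ k = A ^ k := by
    refine Matrix.ext_of_mulVec_single fun i => ?_
    obtain ⟨w, hw⟩ := exists_mulVec_pow_succ hk.2.1 (Pi.single i 1)
    rw [← Matrix.mulVec_mulVec, ← hw, Matrix.mulVec_mulVec, Matrix.mul_assoc, h2, ← pow_succ']
  calc A * X * X = A * X * A ^ k * Z := by rw [Matrix.mul_assoc (A * X), ← hZ]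
    _ = X := by rw [hfix, ← hZ]

/-- The m-core-EP order is transitive. -/
theorem mCoreEPLE_trans {n k t s : ℕ} (A B C : Matrix (Fin n) (Fin n) ℂ)
    (hrAB : A.rank ≤ B.rank) (hrBC : B.rank ≤ C.rank)
    (hk : IsInd A k) (ht : IsInd B t) (hs : IsInd C s)
    (hrkA : (A ^ k).rank = (madj (A ^ k) * A ^ k).rank)
    (hrkB : (B ^ t).rank = (madj (B ^ t) * B ^ t).rank)
    (hrkC : (C ^ s).rank = (madj (C ^ s) * C ^ s).rank)
    (hAB : MCoreEPLE A B k) (hBC : MCoreEPLE B C t) :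
    MCoreEPLE A C k := by
  obtain ⟨X, hX, hXA, hAX⟩ := hAB
  obtain ⟨Y, ⟨-, hY2, hY3, -⟩, hYB, hBY⟩ := hBC
  have hBXX : B * X * X = X := by rw [← hAX]; exact mul_sq_of_isMCoreEP hk hX
  have hpow : ∀ m : ℕ, B ^ m * X ^ (m + 1) = X := by
    intro m
    induction m with
    | zero => simp
    | succ m ih =>
      calc B ^ (m + 1) * X ^ (m + 1 + 1) = B * (B ^ m * X ^ (m + 1)) * X := by
            rw [pow_succ' B, pow_succ X (m + 1)]; simp only [Matrix.mul_assoc]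
        _ = X := by rw [ih, hBXX]
  have hYBX : Y * B * X = X := by
    calc Y * B * X = Y * B ^ (t + 1) * X ^ (t + 1) := by
          conv_lhs => rw [← hpow t]
          rw [pow_succ' B]; simp only [Matrix.mul_assoc]
      _ = X := by rw [hY2, hpow]
  have hQP : B * Y * (A * X) = A * X := by
    rw [hAX, Matrix.mul_assoc, ← Matrix.mul_assoc Y, hYBX]
  have hPQ : A * X * (B * Y) = A * X := by
    have h := congrArg madj hQP
    rwa [madj_mul, hY3, hX.2.2.1] at h
  have hXQ : X * (B * Y) = X := by
    calc X * (B * Y) = X * A * X * (B * Y) := by rw [hX.1]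
      _ = X * (A * X * (B * Y)) := by simp only [Matrix.mul_assoc]
      _ = X := by rw [hPQ, ← Matrix.mul_assoc, hX.1]
  refine ⟨X, hX, ?_, ?_⟩
  · calc X * A = X * (B * Y) * B := by rw [hXQ, hXA]
      _ = X * B * (Y * B) := by simp only [Matrix.mul_assoc]
      _ = X * (B * Y) * C := by rw [hYB]; simp only [Matrix.mul_assoc]
      _ = X * C := by rw [hXQ]
  · calc A * X = B * (Y * B * X) := by rw [hYBX, hAX]
      _ = B * Y * (B * X) := by simp only [Matrix.mul_assoc]
      _ = C * (Y * B * X) := by rw [hBY]; simp only [Matrix.mul_assoc]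
      _ = C * X := by rw [hYBX]
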